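/- Let U : ℝ → [0,∞) be even and measurable with ∫_ℝ x²·U(x) dx < ∞, and let i ≠ j be positive integers. For ℓ > 0 set φ_{(i,j)}^ℓ(x,y) := (√2/ℓ)·( sin(iπx/ℓ)·sin(jπy/ℓ) − sin(jπx/ℓ)·sin(iπy/ℓ) ). Then lim_{ℓ→∞} ℓ³ · ∫_{[0,ℓ]²} U(x−y)·|φ_{(i,j)}^ℓ(x,y)|² dx dy = ( π²·(i²+j²)/2 ) · ∫_ℝ u²·U(u) du. -/

import Mathlib

open MeasureTheory Real Filter

/-! With `x = ℓ s + u` and `y = ℓ s`, the amplitude becomes an integral over `(s, u)`. A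
wave function `φ` that vanishes on the diagonal satisfies
`φ (s + u / ℓ, s) ≈ (u / ℓ) * ∂₁φ (s, s)`, so the integral splits in the limit into the second
moment of `U` and `∫ ∂₁φ (s, s) ^ 2`. For a Slater determinant, `∂₁φ (s, s)` is the Wronskian of
the two orbitals, and for sines the Wronskian is a combination of two orthogonal sines. -/

open Set Topology

section DiagonalScaling

variable {E : Type*} [NormedAddCommGroup E] [NormedSpace ℝ E]

lemma measurePreserving_div_fst {α : Type*} [MeasureSpace α] [SFinite (volume : Measure α)]
    {ℓ : ℝ} (hℓ : ℓ ≠ 0) :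
    MeasurePreserving (fun p : ℝ × α => (p.1 / ℓ, p.2)) volume (ENNReal.ofReal |ℓ| • volume) := by
  have hdiv : MeasurePreserving (fun s : ℝ => s / ℓ) volume (ENNReal.ofReal |ℓ| • volume) := by
    refine ⟨by fun_prop, ?_⟩
    simpa only [div_eq_mul_inv, inv_inv] using Real.map_volume_mul_right (inv_ne_zero hℓ)
  have hprod := hdiv.prod (MeasurePreserving.id (volume : Measure α))
  rwa [Measure.prod_smul_left] at hprod

lemma integral_comp_div_sub {ℓ : ℝ} (hℓ : ℓ ≠ 0) (F : ℝ × ℝ → E) :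
    ∫ q : ℝ × ℝ, F (q.2 / ℓ, q.1 - q.2) = |ℓ| • ∫ p, F p := by
  have hT : MeasurePreserving (fun q : ℝ × ℝ => (q.2 / ℓ, q.1 - q.2)) volume
      (ENNReal.ofReal |ℓ| • volume) :=
    (measurePreserving_div_fst hℓ).comp (measurePreserving_prod_sub_swap volume volume)
  have hinj : Function.Injective (fun q : ℝ × ℝ => (q.2 / ℓ, q.1 - q.2)) := by
    rintro ⟨x, y⟩ ⟨x', y'⟩ h
    simp only [Prod.mk.injEq, div_left_inj' hℓ] at h ⊢
    exact ⟨by linarith, h.1⟩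
  rw [hT.integral_comp (hT.measurable.measurableEmbedding hinj), integral_smul_measure,
    ENNReal.toReal_ofReal (abs_nonneg ℓ)]

lemma ae_snd_ne {α β : Type*} [MeasureSpace α] [MeasureSpace β]
    [SFinite (volume : Measure β)] [NullSingletonClass (volume : Measure β)] (c : β) :
    ∀ᵐ p : α × β, p.2 ≠ c :=
  Measure.quasiMeasurePreserving_snd.ae (Measure.ae_ne volume c)

lemma smul_integral_kernel_eq (n : ℕ) (U : ℝ → E) (K : ℝ × ℝ → ℝ) {ℓ : ℝ} (hℓ : 0 < ℓ) :
    (ℓ ^ n / ℓ) • ∫ q : ℝ × ℝ, K (q.1 / ℓ, q.2 / ℓ) • U (q.1 - q.2) =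
      ∫ p : ℝ × ℝ, (K (p.1 + p.2 / ℓ, p.1) / (p.2 / ℓ) ^ n) • (p.2 ^ n • U p.2) := by
  have hshear : ∫ q : ℝ × ℝ, K (q.1 / ℓ, q.2 / ℓ) • U (q.1 - q.2) =
      ℓ • ∫ p : ℝ × ℝ, K (p.1 + p.2 / ℓ, p.1) • U p.2 := by
    simpa only [abs_of_pos hℓ, ← add_div, add_sub_cancel] using
      integral_comp_div_sub hℓ.ne' fun p => K (p.1 + p.2 / ℓ, p.1) • U p.2
  rw [hshear, smul_smul, div_mul_cancel₀ _ hℓ.ne', ← integral_smul]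
  refine integral_congr_ae ?_
  filter_upwards [ae_snd_ne 0] with p hp
  have hscale : ℓ ^ n * (p.2 / ℓ) ^ n = p.2 ^ n := by
    rw [← mul_pow, mul_div_cancel₀ _ hℓ.ne']
  rw [← hscale, smul_smul, smul_smul, mul_left_comm,
    div_mul_cancel₀ _ (pow_ne_zero n (div_ne_zero hp hℓ.ne'))]

lemma tendsto_div_atTop_nhdsNE_zero {u : ℝ} (hu : u ≠ 0) :
    Tendsto (fun ℓ : ℝ => u / ℓ) atTop (𝓝[≠] 0) :=
  tendsto_nhdsWithin_iff.2 ⟨tendsto_const_nhds.div_atTop tendsto_id,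
    (eventually_ne_atTop 0).mono fun _ hℓ => div_ne_zero hu hℓ⟩

theorem tendsto_integral_kernel_of_diagonal_asymptotics {n : ℕ} {U : ℝ → E}
    (hU : Integrable fun u => u ^ n • U u) {K : ℝ × ℝ → ℝ} (hK : Measurable K)
    {g : ℝ → ℝ} (hg : Integrable g) (hKg : ∀ h s, |K (s + h, s)| ≤ g s * |h| ^ n) {k : ℝ → ℝ}
    (hk : ∀ᵐ s, Tendsto (fun h => K (s + h, s) / h ^ n) (𝓝[≠] 0) (𝓝 (k s))) :
    Tendsto (fun ℓ : ℝ => (ℓ ^ n / ℓ) • ∫ q : ℝ × ℝ, K (q.1 / ℓ, q.2 / ℓ) • U (q.1 - q.2))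
      atTop (𝓝 ((∫ s, k s) • ∫ u, u ^ n • U u)) := by
  rw [← integral_prod_smul]
  refine (tendsto_integral_filter_of_dominated_convergence
    (fun p : ℝ × ℝ => g p.1 * ‖p.2 ^ n • U p.2‖) ?_ ?_ (hg.mul_prod hU.norm) ?_).congr' <|
      (eventually_gt_atTop 0).mono fun ℓ hℓ => (smul_integral_kernel_eq n U K hℓ).symm
  · refine Eventually.of_forall fun ℓ => AEStronglyMeasurable.smul ?_ hU.1.comp_snd
    exact (by fun_prop : Measurable fun p : ℝ × ℝ =>
      K (p.1 + p.2 / ℓ, p.1) / (p.2 / ℓ) ^ n).aestronglyMeasurable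
  · filter_upwards [eventually_ne_atTop 0] with ℓ hℓ
    filter_upwards [ae_snd_ne 0] with p hp
    rw [norm_smul, norm_div, norm_pow, Real.norm_eq_abs, Real.norm_eq_abs]
    gcongr
    exact (div_le_iff₀ (by positivity)).2 (hKg _ _)
  · filter_upwards [ae_snd_ne 0, Measure.quasiMeasurePreserving_fst.ae hk] with p hp hkp
    exact (hkp.comp (tendsto_div_atTop_nhdsNE_zero hp)).smul_const _

end DiagonalScaling

section VanishingOnDiagonal

variable {E : Type*} [NormedAddCommGroup E] [NormedSpace ℝ E] {φ : ℝ × ℝ → ℝ}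

lemma norm_le_mul_dist_of_diagonal_eq_zero {X F : Type*} [PseudoMetricSpace X]
    [SeminormedAddCommGroup F] {φ : X × X → F} {C : NNReal} {S : Set X}
    (hφ : LipschitzOnWith C φ (S ×ˢ S)) (hdiag : ∀ s ∈ S, φ (s, s) = 0) {x y : X}
    (hx : x ∈ S) (hy : y ∈ S) : ‖φ (x, y)‖ ≤ C * dist x y := by
  simpa [hdiag y hy, Prod.dist_eq] using hφ.dist_le_mul (x, y) ⟨hx, hy⟩ (y, y) ⟨hy, hy⟩

lemma tendsto_sq_div_sq_of_hasDerivAt {f : ℝ → ℝ} {f' s : ℝ} (hf : HasDerivAt f f' s)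
    (hs : f s = 0) : Tendsto (fun h => f (s + h) ^ 2 / h ^ 2) (𝓝[≠] 0) (𝓝 (f' ^ 2)) := by
  simpa only [hs, sub_zero, smul_eq_mul, inv_mul_eq_div, div_pow] using
    hf.tendsto_slope_zero.pow 2

lemma tendsto_indicator_sq_div_sq {φ' : ℝ → ℝ} {S : Set ℝ}
    (hdiag : ∀ s ∈ interior S, φ (s, s) = 0)
    (hφ' : ∀ s ∈ interior S, HasDerivAt (fun x => φ (x, s)) (φ' s) s) {s : ℝ}
    (hs : s ∉ frontier S) :
    Tendsto (fun h => (S ×ˢ S).indicator (fun p => φ p ^ 2) (s + h, s) / h ^ 2) (𝓝[≠] 0)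
      (𝓝 (S.indicator (fun s => φ' s ^ 2) s)) := by
  by_cases hsS : s ∈ S
  · have hint : s ∈ interior S := by
      by_contra hint
      exact hs ⟨subset_closure hsS, hint⟩
    have hnear : ∀ᶠ h in 𝓝[≠] (0 : ℝ), s + h ∈ S := by
      have hadd : Tendsto (fun h => s + h) (𝓝 0) (𝓝 s) := by
        simpa using (continuous_const_add s).tendsto 0
      exact (hadd.mono_left nhdsWithin_le_nhds) (mem_interior_iff_mem_nhds.1 hint)
    rw [indicator_of_mem hsS]
    refine (tendsto_sq_div_sq_of_hasDerivAt (hφ' s hint) (hdiag s hint)).congr' ?_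
    filter_upwards [hnear] with h hh
    rw [indicator_of_mem (mk_mem_prod hh hsS)]
  · simp [hsS]

lemma abs_indicator_sq_le {C : NNReal} {S : Set ℝ} (hφ : LipschitzOnWith C φ (S ×ˢ S))
    (hdiag : ∀ s ∈ S, φ (s, s) = 0) (h s : ℝ) :
    |(S ×ˢ S).indicator (fun p => φ p ^ 2) (s + h, s)| ≤
      S.indicator (fun _ => (C : ℝ) ^ 2) s * |h| ^ 2 := by
  by_cases hp : (s + h, s) ∈ S ×ˢ S
  · rw [indicator_of_mem hp, indicator_of_mem hp.2, abs_pow, ← mul_pow]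
    gcongr
    simpa [Real.dist_eq] using norm_le_mul_dist_of_diagonal_eq_zero hφ hdiag hp.1 hp.2
  · rw [indicator_of_notMem hp, abs_zero]
    exact mul_nonneg (indicator_nonneg (fun _ _ => sq_nonneg _) s) (by positivity)

theorem tendsto_setIntegral_sq_smul_of_diagonal_eq_zero {U : ℝ → E}
    (hU : Integrable fun u => u ^ 2 • U u) {S : Set ℝ} (hS : MeasurableSet S)
    (hSfin : volume S ≠ ⊤) (hSfr : volume (frontier S) = 0) (hφm : Measurable φ) {C : NNReal}
    (hφ : LipschitzOnWith C φ (S ×ˢ S)) (hdiag : ∀ s ∈ S, φ (s, s) = 0) {φ' : ℝ → ℝ}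
    (hφ' : ∀ s ∈ interior S, HasDerivAt (fun x => φ (x, s)) (φ' s) s) :
    Tendsto (fun ℓ : ℝ => ℓ • ∫ q in {x | x / ℓ ∈ S} ×ˢ {y | y / ℓ ∈ S},
        φ (q.1 / ℓ, q.2 / ℓ) ^ 2 • U (q.1 - q.2))
      atTop (𝓝 ((∫ s in S, φ' s ^ 2) • ∫ u, u ^ 2 • U u)) := by
  have hlim := tendsto_integral_kernel_of_diagonal_asymptotics hU
    ((hφm.pow_const 2).indicator (hS.prod hS))
    ((integrable_indicator_iff hS).2 (integrableOn_const hSfin))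
    (abs_indicator_sq_le hφ hdiag)
    ((measure_eq_zero_iff_ae_notMem.1 hSfr).mono fun s hs =>
      tendsto_indicator_sq_div_sq (fun s hs => hdiag s (interior_subset hs)) hφ' hs)
  rw [integral_indicator hS] at hlim
  refine hlim.congr fun ℓ => ?_
  have hSℓ : MeasurableSet {x | x / ℓ ∈ S} := hS.preimage (by fun_prop)
  rw [sq ℓ, mul_self_div_self, ← integral_indicator (hSℓ.prod hSℓ)]
  congr with q
  by_cases hq : (q.1 / ℓ, q.2 / ℓ) ∈ S ×ˢ S
  · rw [indicator_of_mem hq, indicator_of_mem (show q ∈ _ ×ˢ _ from hq)]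
  · rw [indicator_of_notMem hq, indicator_of_notMem (show q ∉ _ ×ˢ _ from hq), zero_smul]

end VanishingOnDiagonal

section SlaterDeterminant

/-- The unnormalised two-particle Slater determinant of the orbitals `f` and `g`: the
antisymmetric wave function of two fermions occupying them. -/
def slaterDet (f g : ℝ → ℝ) (p : ℝ × ℝ) : ℝ := f p.1 * g p.2 - g p.1 * f p.2

variable {f g : ℝ → ℝ}

lemma slaterDet_diagonal (f g : ℝ → ℝ) (s : ℝ) : slaterDet f g (s, s) = 0 :=
  sub_eq_zero.2 (mul_comm (f s) (g s))

lemma contDiff_slaterDet {n : WithTop ℕ∞} (hf : ContDiff ℝ n f) (hg : ContDiff ℝ n g) :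
    ContDiff ℝ n (slaterDet f g) := by
  unfold slaterDet
  fun_prop

lemma hasDerivAt_slaterDet_diagonal {f' g' s : ℝ} (hf : HasDerivAt f f' s)
    (hg : HasDerivAt g g' s) :
    HasDerivAt (fun x => slaterDet f g (x, s)) (f' * g s - g' * f s) s :=
  (hf.mul_const (g s)).sub (hg.mul_const (f s))

theorem tendsto_setIntegral_slaterDet_sq_smul {E : Type*} [NormedAddCommGroup E]
    [NormedSpace ℝ E] {U : ℝ → E} (hU : Integrable fun u => u ^ 2 • U u)
    (hf : ContDiff ℝ 1 f) (hg : ContDiff ℝ 1 g) :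
    Tendsto (fun ℓ : ℝ => ℓ • ∫ q in Icc 0 ℓ ×ˢ Icc 0 ℓ,
        slaterDet f g (q.1 / ℓ, q.2 / ℓ) ^ 2 • U (q.1 - q.2))
      atTop (𝓝 ((∫ s in (0 : ℝ)..1, (deriv f s * g s - deriv g s * f s) ^ 2) •
        ∫ u, u ^ 2 • U u)) := by
  have hφ : ContDiff ℝ 1 (slaterDet f g) := contDiff_slaterDet hf hg
  obtain ⟨C, hC⟩ := hφ.contDiffOn.exists_lipschitzOnWith one_ne_zero
    ((convex_Icc (0 : ℝ) 1).prod (convex_Icc (0 : ℝ) 1)) (isCompact_Icc.prod isCompact_Icc)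
  have hderiv {u : ℝ → ℝ} (hu : ContDiff ℝ 1 u) (s : ℝ) : HasDerivAt u (deriv u s) s :=
    (hu.differentiable one_ne_zero s).hasDerivAt
  rw [intervalIntegral.integral_of_le zero_le_one, ← integral_Icc_eq_integral_Ioc]
  refine (tendsto_setIntegral_sq_smul_of_diagonal_eq_zero hU measurableSet_Icc (by simp)
    ((convex_Icc (0 : ℝ) 1).addHaar_frontier volume) hφ.continuous.measurable hC
    (fun s _ => slaterDet_diagonal f g s)
    (fun s _ => hasDerivAt_slaterDet_diagonal (hderiv hf s) (hderiv hg s))).congr' ?_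
  filter_upwards [eventually_gt_atTop 0] with ℓ hℓ
  have hbox : {x | x / ℓ ∈ Icc (0 : ℝ) 1} = Icc 0 ℓ := by
    ext x
    simp only [mem_ofPred_eq, mem_Icc, div_le_one hℓ, le_div_iff₀ hℓ, zero_mul]
  rw [hbox]

end SlaterDeterminant

section SineOrthogonality

lemma integral_cos_int_mul_pi_mul (k : ℤ) :
    ∫ s in (0 : ℝ)..1, cos (k * π * s) = if k = 0 then 1 else 0 := by
  split_ifs with hk
  · simp [hk]
  · have hkπ : (k * π : ℝ) ≠ 0 := by positivity
    rw [intervalIntegral.integral_comp_mul_left cos hkπ, integral_cos]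
    simp [Real.sin_int_mul_pi]

lemma integral_sin_mul_sin_int_mul_pi_mul (m n : ℤ) :
    ∫ s in (0 : ℝ)..1, sin (m * π * s) * sin (n * π * s) =
      ((if m = n then 1 else 0) - (if m = -n then 1 else 0)) / 2 := by
  have hprod (s : ℝ) : sin (m * π * s) * sin (n * π * s) =
      (cos ((m - n : ℤ) * π * s) - cos ((m + n : ℤ) * π * s)) / 2 := by
    have h := two_mul_sin_mul_sin (m * π * s) (n * π * s)
    push_cast
    rw [sub_mul, sub_mul, add_mul, add_mul, ← h]
    ring
  simp only [hprod]
  rw [intervalIntegral.integral_div, intervalIntegral.integral_sub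
    (Continuous.intervalIntegrable (by fun_prop) _ _)
    (Continuous.intervalIntegrable (by fun_prop) _ _),
    integral_cos_int_mul_pi_mul, integral_cos_int_mul_pi_mul]
  simp only [sub_eq_zero, add_eq_zero_iff_eq_neg]

lemma wronskian_sin_eq (i j s : ℝ) :
    i * π * cos (i * π * s) * sin (j * π * s) - j * π * cos (j * π * s) * sin (i * π * s) =
      π / 2 * ((i - j) * sin ((i + j) * π * s) - (i + j) * sin ((i - j) * π * s)) := by
  simp only [add_mul, sub_mul, sin_add, sin_sub]
  ring

lemma integral_wronskian_sin_sq {i j : ℤ} (hi : i ≠ 0) (hj : j ≠ 0) (hij : i ≠ j)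
    (hij' : i ≠ -j) :
    ∫ s in (0 : ℝ)..1, (i * π * cos (i * π * s) * sin (j * π * s) -
        j * π * cos (j * π * s) * sin (i * π * s)) ^ 2 =
      π ^ 2 * ((i : ℝ) ^ 2 + (j : ℝ) ^ 2) / 4 := by
  set m : ℤ := i + j with hm
  set n : ℤ := i - j with hn
  have hexpand (s : ℝ) : (i * π * cos (i * π * s) * sin (j * π * s) -
        j * π * cos (j * π * s) * sin (i * π * s)) ^ 2 =
      π ^ 2 / 4 * (n ^ 2 * (sin (m * π * s) * sin (m * π * s)) +
        m ^ 2 * (sin (n * π * s) * sin (n * π * s)) -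
        2 * m * n * (sin (m * π * s) * sin (n * π * s))) := by
    rw [wronskian_sin_eq, hm, hn]
    push_cast
    ring
  have hint (c : ℝ) (m n : ℤ) : IntervalIntegrable
      (fun s => c * (sin (m * π * s) * sin (n * π * s))) volume 0 1 :=
    Continuous.intervalIntegrable (by fun_prop) _ _
  have hmm : m ≠ -m := by lia
  have hnn : n ≠ -n := by lia
  have hmn : m ≠ n := by lia
  have hmn' : m ≠ -n := by lia
  simp only [hexpand]
  rw [intervalIntegral.integral_const_mul,
    intervalIntegral.integral_sub ((hint _ _ _).add (hint _ _ _)) (hint _ _ _),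
    intervalIntegral.integral_add (hint _ _ _) (hint _ _ _)]
  simp only [intervalIntegral.integral_const_mul, integral_sin_mul_sin_int_mul_pi_mul, if_true,
    if_false, hmm, hnn, hmn, hmn']
  rw [hm, hn]
  push_cast
  ring

end SineOrthogonality

lemma pow_three_smul_integral_div_mul_sq_smul {X E : Type*} [MeasurableSpace X]
    [NormedAddCommGroup E] [NormedSpace ℝ E] (μ : Measure X) (φ : X → ℝ) (V : X → E) (c : ℝ)
    {ℓ : ℝ} (hℓ : ℓ ≠ 0) :
    ℓ ^ 3 • ∫ q, (c / ℓ * φ q) ^ 2 • V q ∂μ = c ^ 2 • ℓ • ∫ q, φ q ^ 2 • V q ∂μ := by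
  have hpull (q : X) : (c / ℓ * φ q) ^ 2 • V q = (c / ℓ) ^ 2 • φ q ^ 2 • V q := by
    rw [mul_pow, mul_smul]
  simp only [hpull]
  rw [integral_smul, smul_smul, smul_smul]
  congr 1
  field_simp

theorem stmt7_general {E : Type*} [NormedAddCommGroup E] [NormedSpace ℝ E] [CompleteSpace E]
    (U : ℝ → E) (hU2 : Integrable (fun x => x ^ 2 • U x))
    (i j : ℕ) (hi : 1 ≤ i) (hj : 1 ≤ j) (hij : i ≠ j) :
    Tendsto (fun ℓ : ℝ => ℓ ^ 3 •
        ∫ q in (Icc (0:ℝ) ℓ ×ˢ Icc (0:ℝ) ℓ),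
          (√2 / ℓ * (sin (i * π * q.1 / ℓ) * sin (j * π * q.2 / ℓ)
            - sin (j * π * q.1 / ℓ) * sin (i * π * q.2 / ℓ))) ^ 2 • U (q.1 - q.2))
      atTop (𝓝 ((π ^ 2 * ((i : ℝ) ^ 2 + (j : ℝ) ^ 2) / 2) • ∫ u, u ^ 2 • U u)) := by
  have hderiv (n : ℕ) (s : ℝ) :
      deriv (fun x => sin (n * π * x)) s = n * π * cos (n * π * s) := by
    simp [mul_comm]
  have hW := integral_wronskian_sin_sq (i := i) (j := j) (by lia) (by lia) (by lia) (by lia)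
  have hlim := (tendsto_setIntegral_slaterDet_sq_smul hU2 (f := fun x => sin (i * π * x))
    (g := fun x => sin (j * π * x)) (by fun_prop) (by fun_prop)).const_smul (√2 ^ 2)
  simp only [Int.cast_natCast] at hW
  simp only [hderiv, hW] at hlim
  convert hlim.congr' ?_ using 2
  · rw [smul_smul, sq_sqrt zero_le_two]
    congr 1
    ring
  · filter_upwards [eventually_ne_atTop 0] with ℓ hℓ
    rw [← pow_three_smul_integral_div_mul_sq_smul _ _ _ _ hℓ]
    simp only [slaterDet, mul_div_assoc]

/-- The interaction amplitude of two fermions occupying the `i`-th and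
`j`-th Dirichlet levels of `[0,ℓ]` satisfies
`ℓ³·∫∫ U(x−y)|φ_{(i,j)}^ℓ(x,y)|² dx dy → (π²(i²+j²)/2)·∫ u²U(u) du` as `ℓ → ∞`. -/
theorem stmt7
    (U : ℝ → ℝ) (hUmeas : Measurable U) (hUnonneg : ∀ x, 0 ≤ U x)
    (hUeven : ∀ x, U (-x) = U x)
    (hU2 : Integrable (fun x => x ^ 2 * U x))
    (i j : ℕ) (hi : 1 ≤ i) (hj : 1 ≤ j) (hij : i ≠ j) :
    Tendsto (fun ℓ : ℝ => ℓ ^ 3 *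
        ∫ q in (Set.Icc (0:ℝ) ℓ ×ˢ Set.Icc (0:ℝ) ℓ),
          U (q.1 - q.2) *
            (Real.sqrt 2 / ℓ *
              (Real.sin ((i : ℝ) * π * q.1 / ℓ) * Real.sin ((j : ℝ) * π * q.2 / ℓ)
                - Real.sin ((j : ℝ) * π * q.1 / ℓ) * Real.sin ((i : ℝ) * π * q.2 / ℓ))) ^ 2)
      atTop
      (nhds ((π ^ 2 * ((i : ℝ) ^ 2 + (j : ℝ) ^ 2) / 2) * ∫ u : ℝ, u ^ 2 * U u)) := by
  simpa only [smul_eq_mul, mul_comm (U _)] using stmt7_general U hU2 i j hi hj hij
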